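/- Let λ ≠ 0 be real, k > 1, 0 < η < 1, R > 1/η, 0 < P < X. With S_k(α) = Σ_{δX ≤ p^k ≤ X}(log p)e(p^k α) over primes and K_η(α) = (sin(πηα)/(πα))², one has ∫_{P/X}^{R} |S_k(λα)|² K_η(α) dα ≪ η X^{1/k} (log X)³. -/

import Mathlib

open Real MeasureTheory

/-- `e(x) = exp(2πix)` -/
noncomputable def e (x : ℝ) : ℂ := Complex.exp (2 * Real.pi * Complex.I * x)

/-- `S_k(α) = Σ_{δX ≤ p^k ≤ X} (log p) e(p^k α)`, sum over primes `p`. -/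
noncomputable def Sk (δ X k : ℝ) (α : ℝ) : ℂ :=
  ∑ p ∈ (Finset.Icc 1 (Nat.floor X)).filter
      (fun p : ℕ => p.Prime ∧ δ * X ≤ (p : ℝ) ^ k ∧ (p : ℝ) ^ k ≤ X),
    (Real.log p : ℂ) * e ((p : ℝ) ^ k * α)

/-- `K_η(α) = (sin(πηα)/(πα))²` -/
noncomputable def Keta (η α : ℝ) : ℝ := (Real.sin (Real.pi * η * α) / (Real.pi * α)) ^ 2

/-! The kernel `K_η` is the Fourier transform of the tent function `x ↦ max 0 (η - |x|)`. By
Fourier inversion, the integral of `|∑ aᵢ e(xᵢ α)|² K_η(α)` over the whole real line equals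
`∑ᵢ ∑ⱼ aᵢ āⱼ max 0 (η - |xᵢ - xⱼ|)`: only the pairs of frequencies at distance less than `η`
contribute. For `xₚ = λ p^k` the frequencies are `|λ|`-separated, because `|p - q| ≤ |p^k - q^k|`,
so each `p` has at most `2η/|λ| + 1` such neighbours, and the integral is at most
`η (2η/|λ| + 1) ∑ (log p)²`. Chebyshev's bound for `θ` at `X^(1/k)` estimates the last sum. The
whole line thus already satisfies the bound, with `log X` in place of `(log X)³`, and the mean
values of `S_k` over short intervals do not enter. -/

open FourierTransform Finset
open scoped ComplexConjugate

section TentFunction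

/-- The tent `max 0 (η - |x|)` of height and half-width `η`, whose Fourier transform is `K_η`. -/
noncomputable def tent (η x : ℝ) : ℝ := max 0 (η - |x|)

lemma tent_nonneg (η x : ℝ) : 0 ≤ tent η x := le_max_left _ _

lemma tent_neg (η x : ℝ) : tent η (-x) = tent η x := by simp [tent]

lemma tent_of_le_abs {η x : ℝ} (h : η ≤ |x|) : tent η x = 0 := max_eq_left (by linarith)

lemma tent_le {η : ℝ} (hη : 0 ≤ η) (x : ℝ) : tent η x ≤ η :=
  max_le hη (by linarith [abs_nonneg x])

lemma continuous_tent (η : ℝ) : Continuous (tent η) := by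
  unfold tent
  fun_prop

lemma support_tent_subset (η : ℝ) : Function.support (tent η) ⊆ Set.Ioo (-η) η := fun _ hx ↦
  abs_lt.1 (not_le.1 (mt tent_of_le_abs hx))

lemma integrable_tent (η : ℝ) : Integrable (tent η) :=
  (continuous_tent η).integrable_of_hasCompactSupport <|
    .intro' isCompact_Icc isClosed_Icc fun _ hx ↦ by_contra fun h ↦
      hx (Set.Ioo_subset_Icc_self (support_tent_subset η h))

lemma integral_sub_mul_exp (η : ℝ) {c : ℂ} (hc : c ≠ 0) :
    ∫ x in (0 : ℝ)..η, ((η : ℂ) - x) * Complex.exp (c * x)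
      = (Complex.exp (c * η) - 1) / c ^ 2 - η / c := by
  have hderiv : ∀ x : ℝ, HasDerivAt
      (fun x : ℝ ↦ (((η : ℂ) - x) / c + 1 / c ^ 2) * Complex.exp (c * x))
      (((η : ℂ) - x) * Complex.exp (c * x)) x := fun x ↦ by
    have hid : HasDerivAt (fun x : ℝ ↦ (x : ℂ)) 1 x := Complex.ofRealCLM.hasDerivAt
    convert! (((hid.const_sub (η : ℂ)).div_const c).add_const (1 / c ^ 2)).mul
      (hid.const_mul c).cexp using 1
    field_simp
    ring
  rw [intervalIntegral.integral_eq_sub_of_hasDerivAt (fun x _ ↦ hderiv x)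
    (by apply Continuous.intervalIntegrable; fun_prop)]
  simp only [sub_self, Complex.ofReal_zero, mul_zero, Complex.exp_zero, sub_zero]
  field_simp
  ring

lemma integral_tent_mul_exp {η : ℝ} (hη : 0 ≤ η) {c : ℂ} (hc : c ≠ 0) :
    ∫ x, (tent η x : ℂ) * Complex.exp (c * x)
      = (Complex.exp (c * η) + Complex.exp (-c * η) - 2) / c ^ 2 := by
  set f : ℝ → ℂ := fun x ↦ (tent η x : ℂ) * Complex.exp (c * x) with hf
  have hsupp : Function.support f ⊆ Set.Ioc (-η) η := fun x hx ↦
    Set.Ioo_subset_Ioc_self <| support_tent_subset η fun h ↦ hx (by simp [hf, h])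
  have hint : ∀ a b : ℝ, IntervalIntegrable f volume a b := fun a b ↦ by
    have := continuous_tent η
    apply Continuous.intervalIntegrable
    fun_prop
  have half : ∀ d : ℂ, d ≠ 0 → ∫ x in (0 : ℝ)..η, (tent η x : ℂ) * Complex.exp (d * x)
      = (Complex.exp (d * η) - 1) / d ^ 2 - η / d := fun d hd ↦ by
    rw [← integral_sub_mul_exp η hd]
    refine intervalIntegral.integral_congr fun x hx ↦ ?_
    rw [Set.uIcc_of_le hη] at hx
    simp [tent, abs_of_nonneg hx.1, max_eq_right (sub_nonneg.2 hx.2)]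
  have left : ∫ x in (-η)..0, f x
      = ∫ x in (0 : ℝ)..η, (tent η x : ℂ) * Complex.exp (-c * x) := by
    rw [← neg_zero, ← intervalIntegral.integral_comp_neg]
    simp [hf, tent_neg]
  rw [← intervalIntegral.integral_eq_integral_of_support_subset hsupp,
    ← intervalIntegral.integral_add_adjacent_intervals (hint _ 0) (hint 0 _), left,
    half _ (neg_ne_zero.2 hc), half _ hc]
  field_simp
  ring

end TentFunction

section Kernel

lemma Keta_nonneg (η α : ℝ) : 0 ≤ Keta η α := sq_nonneg _

lemma Keta_le_sq (η α : ℝ) : Keta η α ≤ η ^ 2 := by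
  rcases eq_or_ne α 0 with rfl | hα
  · simpa [Keta] using sq_nonneg η
  · rw [Keta, div_pow, div_le_iff₀ (by positivity), ← mul_pow, sq_le_sq]
    exact abs_sin_le_abs.trans_eq (by ring_nf)

lemma Keta_mul_sq_le_one (η α : ℝ) : Keta η α * α ^ 2 ≤ 1 := by
  rcases eq_or_ne α 0 with rfl | hα
  · simp
  · calc Keta η α * α ^ 2 = sin (π * η * α) ^ 2 / π ^ 2 := by unfold Keta; field_simp
      _ ≤ 1 := div_le_one_of_le₀ ((sin_sq_le_one _).trans (by nlinarith [pi_gt_three]))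
          (sq_nonneg π)

lemma integrable_Keta (η : ℝ) : Integrable (Keta η) := by
  refine (integrable_inv_one_add_sq.const_mul (η ^ 2 + 1)).mono'
    (Measurable.aestronglyMeasurable (by unfold Keta; fun_prop)) (.of_forall fun α ↦ ?_)
  rw [norm_of_nonneg (Keta_nonneg η α), ← div_eq_mul_inv, le_div_iff₀ (by positivity)]
  linarith [Keta_le_sq η α, Keta_mul_sq_le_one η α]

lemma fourier_tent {η : ℝ} (hη : 0 ≤ η) {w : ℝ} (hw : w ≠ 0) :
    𝓕 (fun x ↦ (tent η x : ℂ)) w = Keta η w := by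
  have hc : (-(2 * π * w * Complex.I) : ℂ) ≠ 0 := by simp [hw, pi_ne_zero]
  calc 𝓕 (fun x ↦ (tent η x : ℂ)) w
      = ∫ x, (tent η x : ℂ) * Complex.exp (-(2 * π * w * Complex.I) * x) := by
        rw [fourier_real_eq_integral_exp_smul]
        refine integral_congr_ae (.of_forall fun x ↦ ?_)
        simp only [smul_eq_mul]
        rw [mul_comm]
        congr 2
        push_cast
        ring
    _ = (2 * Complex.cos (2 * (π * η * w)) - 2) / (-(2 * π * w * Complex.I)) ^ 2 := by
        rw [integral_tent_mul_exp hη hc, Complex.two_cos, add_comm (Complex.exp _)]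
        ring_nf
    _ = Keta η w := by
        rw [Complex.cos_two_mul, Complex.cos_sq', neg_sq, mul_pow _ Complex.I, Complex.I_sq, Keta]
        push_cast
        field_simp
        ring

end Kernel

section ExponentialSums

lemma e_eq_fourierChar (x : ℝ) : e x = (𝐞 x : ℂ) := by
  rw [e, fourierChar_apply]
  push_cast
  ring_nf

lemma norm_e (x : ℝ) : ‖e x‖ = 1 := by rw [e_eq_fourierChar, Circle.norm_coe]

lemma continuous_e : Continuous e := by
  unfold e
  fun_prop

lemma e_mul_conj_e (x y : ℝ) : e x * conj (e y) = e (x - y) := by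
  simp only [e_eq_fourierChar, AddChar.map_sub_eq_div, div_eq_mul_inv, Circle.coe_mul,
    Circle.coe_inv_eq_conj]

lemma integrable_e_mul_Keta (η b : ℝ) : Integrable fun α ↦ e (b * α) * (Keta η α : ℂ) :=
  (integrable_Keta η).ofReal.bdd_mul (c := 1)
    (continuous_e.comp (continuous_const_mul b)).aestronglyMeasurable
    (.of_forall fun _ ↦ (norm_e _).le)

lemma integral_e_mul_Keta {η : ℝ} (hη : 0 ≤ η) (b : ℝ) :
    ∫ α, e (b * α) * (Keta η α : ℂ) = tent η b := by
  -- `𝓕 tent` and `K_η` disagree at `0`, where the division by zero makes `K_η` vanish.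
  have hae : 𝓕 (fun x ↦ (tent η x : ℂ)) =ᵐ[volume] fun w ↦ (Keta η w : ℂ) := by
    filter_upwards [Measure.ae_ne volume 0] with w hw using fourier_tent hη hw
  have inversion : 𝓕⁻ (𝓕 fun x ↦ (tent η x : ℂ)) b = tent η b :=
    (integrable_tent η).ofReal.fourierInv_fourier_eq
      ((integrable_congr hae).2 (integrable_Keta η).ofReal)
      (Complex.continuous_ofReal.comp (continuous_tent η)).continuousAt
  rw [← inversion, fourierInv_eq']
  refine integral_congr_ae (hae.mono fun w hw ↦ ?_)
  simp only [hw, smul_eq_mul, e, RCLike.inner_apply, conj_trivial]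
  congr 2
  push_cast
  ring

variable {ι : Type*} (s : Finset ι) (a : ι → ℂ) (x : ι → ℝ)

lemma norm_sum_e_sq (α : ℝ) : ((‖∑ i ∈ s, a i * e (x i * α)‖ ^ 2 : ℝ) : ℂ)
    = ∑ i ∈ s, ∑ j ∈ s, a i * conj (a j) * e ((x i - x j) * α) := by
  rw [Complex.ofReal_pow, ← Complex.mul_conj', map_sum, sum_mul_sum]
  refine sum_congr rfl fun i _ ↦ sum_congr rfl fun j _ ↦ ?_
  rw [map_mul, sub_mul, ← e_mul_conj_e]
  ring

lemma integrable_norm_sum_e_sq_mul_Keta (η : ℝ) :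
    Integrable fun α ↦ ‖∑ i ∈ s, a i * e (x i * α)‖ ^ 2 * Keta η α := by
  have hcont : Continuous fun α ↦ ‖∑ i ∈ s, a i * e (x i * α)‖ ^ 2 := by
    have := continuous_e
    fun_prop
  refine (integrable_Keta η).bdd_mul (c := (∑ i ∈ s, ‖a i‖) ^ 2) hcont.aestronglyMeasurable
    (.of_forall fun α ↦ ?_)
  rw [norm_of_nonneg (sq_nonneg _)]
  gcongr
  exact norm_sum_le_of_le s fun i _ ↦ by rw [norm_mul, norm_e, mul_one]

lemma integral_norm_sum_e_sq_mul_Keta {η : ℝ} (hη : 0 ≤ η) :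
    ((∫ α, ‖∑ i ∈ s, a i * e (x i * α)‖ ^ 2 * Keta η α : ℝ) : ℂ)
      = ∑ i ∈ s, ∑ j ∈ s, a i * conj (a j) * tent η (x i - x j) := by
  have hint : ∀ i j, Integrable fun α ↦
      a i * conj (a j) * (e ((x i - x j) * α) * (Keta η α : ℂ)) := fun i j ↦
    (integrable_e_mul_Keta η _).const_mul _
  rw [← integral_complex_ofReal]
  simp only [Complex.ofReal_mul, norm_sum_e_sq, sum_mul, mul_assoc (_ * _)]
  rw [integral_finsetSum _ fun i _ ↦ integrable_finsetSum _ fun j _ ↦ hint i j]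
  refine sum_congr rfl fun i _ ↦ ?_
  rw [integral_finsetSum _ fun j _ ↦ hint i j]
  refine sum_congr rfl fun j _ ↦ ?_
  rw [integral_const_mul, integral_e_mul_Keta hη]

lemma sum_sum_filter_mul_le_of_card_le (r : ι → ι → Prop) [DecidableRel r]
    (hr : ∀ i j, r i j ↔ r j i) (f : ι → ℝ) {N : ℝ} (hN : ∀ i ∈ s, (#{j ∈ s | r i j} : ℝ) ≤ N) :
    ∑ i ∈ s, ∑ j ∈ s with r i j, f i * f j ≤ N * ∑ i ∈ s, f i ^ 2 := by
  have hswap : ∑ i ∈ s, ∑ j ∈ s with r i j, f j ^ 2 = ∑ i ∈ s, ∑ j ∈ s with r i j, f i ^ 2 := by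
    simp only [sum_filter]
    rw [sum_comm]
    simp only [hr]
  calc ∑ i ∈ s, ∑ j ∈ s with r i j, f i * f j
      ≤ ∑ i ∈ s, ∑ j ∈ s with r i j, (f i ^ 2 + f j ^ 2) / 2 := by
        gcongr with i _ j _
        linarith [two_mul_le_add_sq (f i) (f j)]
    _ = ∑ i ∈ s, ∑ j ∈ s with r i j, f i ^ 2 := by
        simp only [← sum_div, sum_add_distrib, hswap, add_self_div_two]
    _ = ∑ i ∈ s, (#{j ∈ s | r i j} : ℝ) * f i ^ 2 := by simp only [sum_const, nsmul_eq_mul]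
    _ ≤ N * ∑ i ∈ s, f i ^ 2 := by
        rw [mul_sum]
        gcongr with i hi
        exact hN i hi

lemma integral_norm_sum_e_sq_mul_Keta_le {η : ℝ} (hη : 0 ≤ η) {N : ℝ}
    (hN : ∀ i ∈ s, (#{j ∈ s | |x i - x j| < η} : ℝ) ≤ N) :
    ∫ α, ‖∑ i ∈ s, a i * e (x i * α)‖ ^ 2 * Keta η α ≤ η * (N * ∑ i ∈ s, ‖a i‖ ^ 2) := by
  have hterm : ∀ i j, ‖a i * conj (a j) * (tent η (x i - x j) : ℂ)‖
      ≤ if |x i - x j| < η then η * (‖a i‖ * ‖a j‖) else 0 := fun i j ↦ by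
    rw [norm_mul, norm_mul, Complex.norm_conj, Complex.norm_of_nonneg (tent_nonneg _ _)]
    split_ifs with h
    · rw [mul_comm]
      gcongr
      exact tent_le hη _
    · rw [tent_of_le_abs (not_lt.1 h), mul_zero]
  calc ∫ α, ‖∑ i ∈ s, a i * e (x i * α)‖ ^ 2 * Keta η α
      ≤ ‖∑ i ∈ s, ∑ j ∈ s, a i * conj (a j) * (tent η (x i - x j) : ℂ)‖ := by
        rw [← integral_norm_sum_e_sq_mul_Keta s a x hη, Complex.norm_real]
        exact le_norm_self _
    _ ≤ ∑ i ∈ s, ∑ j ∈ s, if |x i - x j| < η then η * (‖a i‖ * ‖a j‖) else 0 :=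
        norm_sum_le_of_le s fun i _ ↦ norm_sum_le_of_le s fun j _ ↦ hterm i j
    _ = η * ∑ i ∈ s, ∑ j ∈ s with |x i - x j| < η, ‖a i‖ * ‖a j‖ := by
        simp only [← sum_filter, mul_sum]
    _ ≤ η * (N * ∑ i ∈ s, ‖a i‖ ^ 2) := by
        gcongr
        exact sum_sum_filter_mul_le_of_card_le s (|x · - x ·| < η)
          (fun i j ↦ by rw [abs_sub_comm]) (‖a ·‖) hN

end ExponentialSums

section PrimePowers

lemma monotoneOn_rpow_sub_self {k : ℝ} (hk : 1 ≤ k) :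
    MonotoneOn (fun x : ℝ ↦ x ^ k - x) (Set.Ici 1) := fun y hy x hx hyx ↦ by
  have factor : ∀ z ∈ Set.Ici (1 : ℝ), z ^ k - z = z * (z ^ (k - 1) - 1) := fun z hz ↦ by
    have hz0 : z ≠ 0 := (zero_lt_one.trans_le hz).ne'
    rw [rpow_sub_one hz0]
    field_simp
  have hk0 : 0 ≤ k - 1 := sub_nonneg.2 hk
  have hy0 : (0 : ℝ) ≤ y := zero_le_one.trans hy
  have hpow : 1 ≤ y ^ (k - 1) := one_le_rpow hy hk0
  simp only [factor y hy, factor x hx]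
  gcongr
  linarith

lemma abs_sub_le_abs_rpow_sub_rpow {k : ℝ} (hk : 1 ≤ k) {x y : ℝ} (hx : 1 ≤ x) (hy : 1 ≤ y) :
    |x - y| ≤ |x ^ k - y ^ k| := by
  wlog hyx : y ≤ x generalizing x y
  · rw [abs_sub_comm, abs_sub_comm (x ^ k)]
    exact this hy hx (le_of_not_ge hyx)
  have := monotoneOn_rpow_sub_self hk hy hx hyx
  rw [abs_of_nonneg (sub_nonneg.2 hyx)]
  exact le_trans (by linarith) (le_abs_self _)

lemma card_filter_abs_sub_le (s : Finset ℕ) (p : ℕ) {D : ℝ} (hD : 0 ≤ D) :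
    (#{q ∈ s | |(p : ℝ) - (q : ℕ)| ≤ D} : ℝ) ≤ 2 * D + 1 := by
  have le_add_floor : ∀ m n : ℕ, (m : ℝ) - n ≤ D → m ≤ n + ⌊D⌋₊ := fun m n hmn ↦ by
    rw [add_comm, ← Nat.floor_add_natCast hD]
    exact Nat.le_floor (by linarith)
  have hsub : {q ∈ s | |(p : ℝ) - (q : ℕ)| ≤ D} ⊆ Icc (p - ⌊D⌋₊) (p + ⌊D⌋₊) := fun q hq ↦ by
    obtain ⟨hpq, hqp⟩ := abs_sub_le_iff.1 (mem_filter.1 hq).2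
    exact mem_Icc.2 ⟨tsub_le_iff_right.2 (le_add_floor p q hpq), le_add_floor q p hqp⟩
  have hcard : #{q ∈ s | |(p : ℝ) - (q : ℕ)| ≤ D} ≤ 2 * ⌊D⌋₊ + 1 :=
    (card_le_card hsub).trans (by rw [Nat.card_Icc]; omega)
  calc (#{q ∈ s | |(p : ℝ) - (q : ℕ)| ≤ D} : ℝ) ≤ 2 * ⌊D⌋₊ + 1 := mod_cast hcard
    _ ≤ 2 * D + 1 := by gcongr; exact Nat.floor_le hD

/-- The primes `p` with `δX ≤ p^k ≤ X`, over which the sum `S_k` runs. -/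
noncomputable def SkPrimes (δ X k : ℝ) : Finset ℕ :=
  {p ∈ Icc 1 ⌊X⌋₊ | p.Prime ∧ δ * X ≤ (p : ℝ) ^ k ∧ (p : ℝ) ^ k ≤ X}

variable {δ X k l η : ℝ}

lemma Sk_mul_eq_sum (δ X k l α : ℝ) :
    Sk δ X k (l * α) = ∑ p ∈ SkPrimes δ X k, (log p : ℂ) * e (l * (p : ℝ) ^ k * α) := by
  simp only [Sk, SkPrimes]
  refine sum_congr rfl fun p _ ↦ ?_
  ring_nf

lemma prime_of_mem_SkPrimes {p : ℕ} (hp : p ∈ SkPrimes δ X k) : p.Prime :=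
  (mem_filter.1 hp).2.1

lemma le_rpow_inv_of_mem_SkPrimes (hk : 0 < k) {p : ℕ} (hp : p ∈ SkPrimes δ X k) :
    (p : ℝ) ≤ X ^ (1 / k) := by
  have hpX : (p : ℝ) ^ k ≤ X := (mem_filter.1 hp).2.2.2
  rw [one_div]
  exact (le_rpow_inv_iff_of_pos p.cast_nonneg ((rpow_nonneg p.cast_nonneg k).trans hpX) hk).2 hpX

lemma sum_log_sq_SkPrimes_le (δ : ℝ) (hX : 1 ≤ X) (hk : 0 < k) :
    ∑ p ∈ SkPrimes δ X k, log p ^ 2 ≤ log X / k * (log 4 * X ^ (1 / k)) := by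
  have hY : 0 ≤ X ^ (1 / k) := by positivity
  have hlogY : log (X ^ (1 / k)) = log X / k := by rw [log_rpow (by linarith), one_div_mul_eq_div]
  have hsub : SkPrimes δ X k ⊆ {p ∈ Ioc 0 ⌊X ^ (1 / k)⌋₊ | p.Prime} := fun p hp ↦ by
    have hprime := prime_of_mem_SkPrimes hp
    exact mem_filter.2 ⟨mem_Ioc.2 ⟨hprime.pos, Nat.le_floor (le_rpow_inv_of_mem_SkPrimes hk hp)⟩,
      hprime⟩
  calc ∑ p ∈ SkPrimes δ X k, log p ^ 2
      ≤ ∑ p ∈ SkPrimes δ X k, log X / k * log p := by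
        refine sum_le_sum fun p hp ↦ ?_
        have hp0 : (0 : ℝ) < p := mod_cast (prime_of_mem_SkPrimes hp).pos
        rw [sq, ← hlogY]
        gcongr
        exact le_rpow_inv_of_mem_SkPrimes hk hp
    _ = log X / k * ∑ p ∈ SkPrimes δ X k, log p := by rw [mul_sum]
    _ ≤ log X / k * Chebyshev.theta (X ^ (1 / k)) := by
        have := log_nonneg hX
        gcongr
        exact sum_le_sum_of_subset_of_nonneg hsub fun p _ _ ↦ log_natCast_nonneg p
    _ ≤ log X / k * (log 4 * X ^ (1 / k)) := by
        have := log_nonneg hX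
        gcongr
        exact Chebyshev.theta_le_log4_mul_x hY

lemma card_near_frequencies_le (hl : l ≠ 0) (hk : 1 ≤ k) (hη : 0 ≤ η) {p : ℕ}
    (hp : p ∈ SkPrimes δ X k) :
    (#{q ∈ SkPrimes δ X k | |l * (p : ℝ) ^ k - l * ((q : ℕ) : ℝ) ^ k| < η} : ℝ)
      ≤ 2 * (η / |l|) + 1 := by
  refine le_trans ?_ (card_filter_abs_sub_le (SkPrimes δ X k) p (by positivity))
  gcongr with q hq
  intro hpq
  have one_le : ∀ r ∈ SkPrimes δ X k, (1 : ℝ) ≤ r := fun r hr ↦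
    mod_cast (prime_of_mem_SkPrimes hr).one_le
  rw [← mul_sub, abs_mul, ← lt_div_iff₀' (abs_pos.2 hl)] at hpq
  exact (abs_sub_le_abs_rpow_sub_rpow hk (one_le p hp) (one_le q hq)).trans hpq.le

end PrimePowers

lemma integrable_norm_Sk_sq_mul_Keta (δ X k l η : ℝ) :
    Integrable fun α ↦ ‖Sk δ X k (l * α)‖ ^ 2 * Keta η α := by
  simp only [Sk_mul_eq_sum]
  exact integrable_norm_sum_e_sq_mul_Keta _ _ _ η

lemma integral_norm_Sk_sq_mul_Keta_le (δ : ℝ) {l : ℝ} (hl : l ≠ 0) {k : ℝ} (hk : 1 ≤ k) {X : ℝ}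
    (hX : 1 ≤ X) {η : ℝ} (hη : 0 ≤ η) :
    ∫ α, ‖Sk δ X k (l * α)‖ ^ 2 * Keta η α
      ≤ log 4 * (2 * (η / |l|) + 1) * η * X ^ (1 / k) * (log X / k) := by
  calc ∫ α, ‖Sk δ X k (l * α)‖ ^ 2 * Keta η α
      ≤ η * ((2 * (η / |l|) + 1) * ∑ p ∈ SkPrimes δ X k, ‖(log p : ℂ)‖ ^ 2) := by
        simp only [Sk_mul_eq_sum]
        exact integral_norm_sum_e_sq_mul_Keta_le _ _ _ hη fun p hp ↦
          card_near_frequencies_le hl hk hη hp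
    _ ≤ η * ((2 * (η / |l|) + 1) * (log X / k * (log 4 * X ^ (1 / k)))) := by
        simp only [Complex.norm_real, norm_eq_abs, sq_abs]
        gcongr
        exact sum_log_sq_SkPrimes_le δ hX (by linarith)
    _ = log 4 * (2 * (η / |l|) + 1) * η * X ^ (1 / k) * (log X / k) := by ring

lemma intervalIntegral_le_integral {f : ℝ → ℝ} (hf : Integrable f) (hf0 : 0 ≤ f) (a b : ℝ) :
    ∫ x in a..b, f x ≤ ∫ x, f x :=
  calc ∫ x in a..b, f x ≤ ∫ x in Set.uIoc a b, ‖f x‖ :=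
        (le_norm_self _).trans intervalIntegral.norm_integral_le_integral_norm_uIoc
    _ ≤ ∫ x, f x := by
        simp only [norm_of_nonneg (hf0 _)]
        exact setIntegral_le_integral hf (.of_forall hf0)

lemma log_le_log_cube_div {X : ℝ} (hX : 2 ≤ X) : log X ≤ log X ^ 3 / log 2 ^ 2 := by
  have hlogX : 0 ≤ log X := log_nonneg (by linarith)
  rw [le_div_iff₀ (by positivity)]
  calc log X * log 2 ^ 2 ≤ log X * log X ^ 2 := by gcongr
    _ = log X ^ 3 := by ring

theorem Sk_sq_Keta_bound_general {l : ℝ} (hl : l ≠ 0) {k : ℝ} (hk : 1 ≤ k) :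
    ∃ C > 0, ∀ δ : ℝ, ∀ X ≥ (1 : ℝ), ∀ η : ℝ, 0 ≤ η → η ≤ 1 → ∀ a b : ℝ,
      ∫ α in a..b, ‖Sk δ X k (l * α)‖ ^ 2 * Keta η α ≤ C * η * X ^ (1 / k) * log X := by
  refine ⟨log 4 * (2 * (1 / |l|) + 1) / k, by positivity, fun δ X hX η hη hη1 a b ↦ ?_⟩
  have hlogX : 0 ≤ log X := log_nonneg hX
  calc ∫ α in a..b, ‖Sk δ X k (l * α)‖ ^ 2 * Keta η α
      ≤ ∫ α, ‖Sk δ X k (l * α)‖ ^ 2 * Keta η α :=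
        intervalIntegral_le_integral (integrable_norm_Sk_sq_mul_Keta δ X k l η)
          (fun α ↦ mul_nonneg (sq_nonneg _) (Keta_nonneg η α)) a b
    _ ≤ log 4 * (2 * (η / |l|) + 1) * η * X ^ (1 / k) * (log X / k) :=
        integral_norm_Sk_sq_mul_Keta_le δ hl hk hX hη
    _ ≤ log 4 * (2 * (1 / |l|) + 1) * η * X ^ (1 / k) * (log X / k) := by gcongr
    _ = log 4 * (2 * (1 / |l|) + 1) / k * η * X ^ (1 / k) * log X := by ring

theorem Sk_sq_Keta_bound (δ : ℝ) (hδ0 : 0 < δ) (hδ1 : δ < 1) (l : ℝ) (hl : l ≠ 0)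
    (k : ℝ) (hk : 1 < k) :
    ∃ C > 0, ∀ X ≥ (2 : ℝ), ∀ η : ℝ, 0 < η → η < 1 → ∀ R > 1 / η, ∀ P : ℝ, 0 < P → P < X →
      ∫ α in (P / X)..R, ‖Sk δ X k (l * α)‖ ^ 2 * Keta η α
        ≤ C * η * X ^ (1 / k) * Real.log X ^ 3 := by
  obtain ⟨C, hC, hbound⟩ := Sk_sq_Keta_bound_general hl hk.le
  refine ⟨C / log 2 ^ 2, by positivity, fun X hX η hη hη1 R _ P _ _ ↦ ?_⟩
  calc ∫ α in (P / X)..R, ‖Sk δ X k (l * α)‖ ^ 2 * Keta η α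
      ≤ C * η * X ^ (1 / k) * log X := hbound δ X (by linarith) η hη.le hη1.le _ _
    _ ≤ C * η * X ^ (1 / k) * (log X ^ 3 / log 2 ^ 2) := by
        gcongr
        exact log_le_log_cube_div hX
    _ = C / log 2 ^ 2 * η * X ^ (1 / k) * log X ^ 3 := by ring
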